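/- Let n ≥ 2, θ > 0, and let X_1,…,X_n be i.i.d. Uniform[0,θ] random variables. Then τ_n = X̄_n / X_(n) has probability density function f_{τ_n}(t) = n · I_{n−1}(n·t − 1) for t ∈ [1/n, 1], where I_{n−1} denotes the probability density function of the sum of n−1 independent Uniform[0,1] random variables. -/

import Mathlib

open MeasureTheory ProbabilityTheory

/-- The uniform probability measure on `[0, θ]`. -/
noncomputable def uniformMeasure (θ : ℝ) : Measure ℝ :=
  ENNReal.ofReal θ⁻¹ • volume.restrict (Set.Icc 0 θ)

/-- The joint law of an i.i.d. sample of size `n` from `Uniform[0, θ]`. -/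
noncomputable def iidUniform (n : ℕ) (θ : ℝ) : Measure (Fin n → ℝ) :=
  Measure.pi fun _ => uniformMeasure θ

/-- Sample maximum. -/
noncomputable def sampleMax {n : ℕ} (x : Fin n → ℝ) : ℝ := ⨆ i, x i

/-- Empirical mean. -/
noncomputable def sampleMean {n : ℕ} (x : Fin n → ℝ) : ℝ := (∑ i, x i) / n

/-- The mean/max statistic `τ_n`. -/
noncomputable def tau {n : ℕ} (x : Fin n → ℝ) : ℝ := sampleMean x / sampleMax x

/-- The Irwin–Hall distribution with parameter `m`: the law of the sum of `m`
independent `Uniform[0,1]` random variables. -/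
noncomputable def irwinHall (m : ℕ) : Measure ℝ :=
  (iidUniform m 1).map fun u => ∑ i, u i

theorem isProbabilityMeasure_uniformMeasure {θ : ℝ} (hθ : 0 < θ) :
    IsProbabilityMeasure (uniformMeasure θ) := by
  constructor
  simp only [uniformMeasure, Measure.smul_apply, Measure.restrict_apply_univ, Real.volume_Icc,
    smul_eq_mul, sub_zero]
  rw [← ENNReal.ofReal_mul (by positivity), inv_mul_cancel₀ hθ.ne', ENNReal.ofReal_one]

theorem ae_uniformMeasure_mem_Ioc (θ : ℝ) : ∀ᵐ y ∂uniformMeasure θ, y ∈ Set.Ioc 0 θ := by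
  apply Measure.ae_smul_measure
  rw [Measure.restrict_congr_set Ioc_ae_eq_Icc.symm]
  exact ae_restrict_mem measurableSet_Ioc

theorem nullSingletonClass_uniformMeasure (θ : ℝ) : NullSingletonClass (uniformMeasure θ) :=
  ⟨fun y => by simp [uniformMeasure]⟩

theorem uniformMeasure_restrict_Iic {θ y : ℝ} (hy : y ∈ Set.Ioc 0 θ) :
    (uniformMeasure θ).restrict (Set.Iic y) =
      ENNReal.ofReal (y / θ) • (uniformMeasure 1).map (fun u => y * u) := by
  obtain ⟨hy0, hyθ⟩ := hy
  have hθ : 0 < θ := hy0.trans_le hyθ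
  ext A hA
  have hm : Measurable fun u : ℝ => y * u := measurable_const_mul y
  have hpre : (fun u : ℝ => y * u) ⁻¹' A ∩ Set.Icc 0 1 =
      (fun u : ℝ => y * u) ⁻¹' (A ∩ Set.Icc 0 y) := by
    ext u
    simp [hy0, div_self hy0.ne']
  have hinter : A ∩ Set.Iic y ∩ Set.Icc 0 θ = A ∩ Set.Icc 0 y := by
    ext u
    simp only [Set.mem_inter_iff, Set.mem_Iic, Set.mem_Icc]
    constructor
    · tauto
    · rintro ⟨h, h0, h1⟩
      exact ⟨⟨h, h1⟩, h0, h1.trans hyθ⟩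
  rw [Measure.restrict_apply hA, Measure.smul_apply, Measure.map_apply hm hA]
  simp only [uniformMeasure, Measure.smul_apply, smul_eq_mul]
  rw [Measure.restrict_apply (hA.inter measurableSet_Iic), Measure.restrict_apply (hm hA), hpre,
    hinter, Real.volume_preimage_mul_left hy0.ne', abs_of_pos (inv_pos.2 hy0), ← mul_assoc,
    ← mul_assoc, ← ENNReal.ofReal_mul (by positivity), ← ENNReal.ofReal_mul (by positivity)]
  congr 2
  field_simp

theorem iidUniform_restrict_le (m : ℕ) {θ y : ℝ} (hy : y ∈ Set.Ioc 0 θ) :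
    (iidUniform m θ).restrict {z | ∀ j, z j ≤ y} =
      ENNReal.ofReal (y / θ) ^ m • (iidUniform m 1).map (fun u j => y * u j) := by
  have := isProbabilityMeasure_uniformMeasure (hy.1.trans_le hy.2)
  have := isProbabilityMeasure_uniformMeasure one_pos
  have hm : Measurable fun u : ℝ => y * u := measurable_const_mul y
  have := Measure.isProbabilityMeasure_map (μ := uniformMeasure 1) hm.aemeasurable
  have hset : {z : Fin m → ℝ | ∀ j, z j ≤ y} = Set.univ.pi fun _ => Set.Iic y := by
    ext z
    simp only [Set.mem_ofPred_eq, Set.mem_univ_pi, Set.mem_Iic]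
  rw [iidUniform, iidUniform, hset, Measure.restrict_pi_pi,
    Measure.pi_map_pi (fun _ => hm.aemeasurable)]
  refine Measure.pi_eq fun s _ => ?_
  simp [uniformMeasure_restrict_Iic hy, Measure.pi_pi, Finset.prod_mul_distrib]

theorem isProbabilityMeasure_irwinHall (m : ℕ) : IsProbabilityMeasure (irwinHall m) := by
  have := isProbabilityMeasure_uniformMeasure one_pos
  have : IsProbabilityMeasure (iidUniform m 1) := by
    unfold iidUniform
    infer_instance
  exact Measure.isProbabilityMeasure_map (by fun_prop)

theorem ae_irwinHall_mem_Icc (m : ℕ) : ∀ᵐ s ∂irwinHall m, s ∈ Set.Icc (0 : ℝ) m := by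
  have := isProbabilityMeasure_uniformMeasure one_pos
  refine (ae_map_iff (by fun_prop) measurableSet_Icc).2 ?_
  have h : ∀ᵐ u ∂iidUniform m 1, ∀ i, u i ∈ Set.Ioc (0 : ℝ) 1 :=
    ae_all_iff.2 fun i => (Measure.quasiMeasurePreserving_eval
      (μ := fun _ : Fin m => uniformMeasure 1) i).ae (ae_uniformMeasure_mem_Ioc 1)
  filter_upwards [h] with u hu
  refine ⟨Finset.sum_nonneg fun i _ => (hu i).1.le, ?_⟩
  simpa using Finset.sum_le_sum fun i (_ : i ∈ Finset.univ) => (hu i).2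

theorem measurable_tau {n : ℕ} : Measurable (tau : (Fin n → ℝ) → ℝ) := by
  have h : Measurable (sampleMax : (Fin n → ℝ) → ℝ) :=
    Measurable.iSup fun i => measurable_pi_apply i
  unfold tau sampleMean
  fun_prop

theorem tau_eq_of_le {m : ℕ} {x : Fin (m + 1) → ℝ} {i : Fin (m + 1)}
    (hx : ∀ j, x (i.succAbove j) ≤ x i) :
    tau x = (x i + ∑ j, x (i.succAbove j)) / (m + 1 : ℕ) / x i := by
  have hmax : sampleMax x = x i :=
    le_antisymm (ciSup_le ((Fin.forall_iff_succAbove i).2 ⟨le_rfl, hx⟩))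
      (le_ciSup (Set.finite_range x).bddAbove i)
  rw [tau, hmax, sampleMean, Fin.sum_univ_succAbove x i]

theorem measurableSet_forall_succAbove_le {m : ℕ} (i : Fin (m + 1)) :
    MeasurableSet {x : Fin (m + 1) → ℝ | ∀ j, x (i.succAbove j) ≤ x i} := by
  simp only [Set.ofPred_forall]
  exact MeasurableSet.iInter fun j =>
    measurableSet_le (measurable_pi_apply _) (measurable_pi_apply _)

theorem iidUniform_succ_apply {m : ℕ} {θ : ℝ} (hθ : 0 < θ) (i : Fin (m + 1))
    {S : Set (Fin (m + 1) → ℝ)} (hS : MeasurableSet S) :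
    iidUniform (m + 1) θ S =
      ∫⁻ y, iidUniform m θ {z | i.insertNth (α := fun _ => ℝ) y z ∈ S} ∂uniformMeasure θ := by
  have := isProbabilityMeasure_uniformMeasure hθ
  let e := MeasurableEquiv.piFinSuccAbove (fun _ : Fin (m + 1) => ℝ) i
  have he := measurePreserving_piFinSuccAbove (fun _ : Fin (m + 1) => uniformMeasure θ) i
  rw [iidUniform, ← (he.symm e).measure_preimage hS.nullMeasurableSet,
    Measure.prod_apply (e.symm.measurable hS)]
  rfl

/-- On the event that the `i`-th observation is the largest, the law of `τ` is, up to a constant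
not depending on `i`, the Irwin–Hall law after an affine change of variables. -/
theorem iidUniform_argmax_inter_tau {m : ℕ} {θ : ℝ} (hθ : 0 < θ) (i : Fin (m + 1))
    {A : Set ℝ} (hA : MeasurableSet A) :
    iidUniform (m + 1) θ ({x | ∀ j, x (i.succAbove j) ≤ x i} ∩ tau ⁻¹' A) =
      (∫⁻ y, ENNReal.ofReal (y / θ) ^ m ∂uniformMeasure θ) *
        irwinHall m ((fun s => (1 + s) / (m + 1 : ℕ)) ⁻¹' A) := by
  rw [iidUniform_succ_apply hθ i
      ((measurableSet_forall_succAbove_le i).inter (measurable_tau hA)),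
    ← lintegral_mul_const _ (by fun_prop)]
  refine lintegral_congr_ae ?_
  filter_upwards [ae_uniformMeasure_mem_Ioc θ] with y hy
  have hset : {z : Fin m → ℝ | i.insertNth (α := fun _ => ℝ) y z ∈
      {x : Fin (m + 1) → ℝ | ∀ j, x (i.succAbove j) ≤ x i} ∩ tau ⁻¹' A} =
      (fun z : Fin m → ℝ => (y + ∑ j, z j) / (m + 1 : ℕ) / y) ⁻¹' A ∩ {z | ∀ j, z j ≤ y} := by
    ext z
    simp only [Set.mem_ofPred_eq, Set.mem_inter_iff, Set.mem_preimage,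
      Fin.insertNth_apply_succAbove, Fin.insertNth_apply_same]
    rw [and_comm]
    refine and_congr_left fun hz => ?_
    rw [tau_eq_of_le (i := i) (by simpa using hz)]
    simp
  have hmeas : MeasurableSet
      ((fun z : Fin m → ℝ => (y + ∑ j, z j) / (m + 1 : ℕ) / y) ⁻¹' A) := by
    have : Measurable fun z : Fin m → ℝ => (y + ∑ j, z j) / (m + 1 : ℕ) / y := by fun_prop
    exact this hA
  have hmeas' : Measurable fun s : ℝ => (1 + s) / (m + 1 : ℕ) := by fun_prop
  rw [hset, ← Measure.restrict_apply hmeas, iidUniform_restrict_le m hy, Measure.smul_apply,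
    Measure.map_apply (by fun_prop) hmeas, irwinHall, Measure.map_apply (by fun_prop) (hmeas' hA),
    smul_eq_mul]
  congr 2
  ext u
  have hy0 : y ≠ 0 := hy.1.ne'
  have : (y + ∑ j, y * u j) / (m + 1 : ℕ) / y = (1 + ∑ j, u j) / (m + 1 : ℕ) := by
    rw [← Finset.mul_sum]
    field_simp
  simp only [Set.mem_preimage, this]

theorem aedisjoint_argmax {m : ℕ} {θ : ℝ} (hθ : 0 < θ) :
    Pairwise (Function.onFun (AEDisjoint (iidUniform (m + 1) θ))
      fun i => {x | ∀ j, x (i.succAbove j) ≤ x i}) := by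
  have := isProbabilityMeasure_uniformMeasure hθ
  have := nullSingletonClass_uniformMeasure θ
  intro i k hik
  obtain ⟨l, rfl⟩ := Fin.exists_succAbove_eq hik.symm
  have hnull : iidUniform (m + 1) θ {x | x (i.succAbove l) = x i} = 0 := by
    rw [iidUniform_succ_apply hθ i
      (measurableSet_eq_fun (measurable_pi_apply _) (measurable_pi_apply _))]
    simp only [Set.mem_ofPred_eq, Fin.insertNth_apply_succAbove, Fin.insertNth_apply_same]
    simp [iidUniform, Measure.pi_hyperplane]
  refine measure_mono_null (fun x hx => le_antisymm (hx.1 l) ?_) hnull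
  obtain ⟨l', hl'⟩ := Fin.exists_succAbove_eq hik
  simpa [hl'] using hx.2 l'

theorem iidUniform_map_tau {m : ℕ} {θ : ℝ} (hθ : 0 < θ) :
    (iidUniform (m + 1) θ).map tau =
      (irwinHall m).map fun s : ℝ => (1 + s) / (m + 1 : ℕ) := by
  have := isProbabilityMeasure_uniformMeasure hθ
  have : IsProbabilityMeasure (iidUniform (m + 1) θ) := by
    unfold iidUniform
    infer_instance
  have := isProbabilityMeasure_irwinHall m
  have hg : Measurable fun s : ℝ => (1 + s) / (m + 1 : ℕ) := by fun_prop
  obtain ⟨c, hc⟩ : ∃ c : ENNReal, ∀ A, MeasurableSet A → (iidUniform (m + 1) θ).map tau A =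
      c * (irwinHall m).map (fun s : ℝ => (1 + s) / (m + 1 : ℕ)) A := by
    refine ⟨(m + 1 : ℕ) * ∫⁻ y, ENNReal.ofReal (y / θ) ^ m ∂uniformMeasure θ, fun A hA => ?_⟩
    have hcover : tau ⁻¹' A =
        ⋃ i, {x : Fin (m + 1) → ℝ | ∀ j, x (i.succAbove j) ≤ x i} ∩ tau ⁻¹' A := by
      rw [← Set.iUnion_inter, eq_comm, Set.inter_eq_right]
      intro x _
      obtain ⟨i, hi⟩ := Finite.exists_max x
      exact Set.mem_iUnion.2 ⟨i, fun j => hi _⟩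
    rw [Measure.map_apply measurable_tau hA, Measure.map_apply hg hA, hcover, measure_iUnion₀
      (fun i k hik => (aedisjoint_argmax hθ hik).mono Set.inter_subset_left Set.inter_subset_left)
      (fun i => ((measurableSet_forall_succAbove_le i).inter
        (measurable_tau hA)).nullMeasurableSet)]
    simp only [iidUniform_argmax_inter_tau hθ _ hA, tsum_fintype, Finset.sum_const,
      Finset.card_univ, Fintype.card_fin, nsmul_eq_mul, mul_assoc]
  have := Measure.isProbabilityMeasure_map (μ := iidUniform (m + 1) θ) measurable_tau.aemeasurable
  have := Measure.isProbabilityMeasure_map (μ := irwinHall m) hg.aemeasurable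
  have hc1 : c = 1 := by
    have h := hc Set.univ MeasurableSet.univ
    rwa [measure_univ, measure_univ, mul_one, eq_comm] at h
  ext A hA
  rw [hc A hA, hc1, one_mul]

/-- Affine change of variables for a density; the density need not be measurable. -/
theorem withDensity_affine_apply {a : ℝ} (ha : 0 < a) (b : ℝ) (f : ℝ → ℝ) {S : Set ℝ}
    (hS : MeasurableSet S) :
    ∫⁻ t in S, ENNReal.ofReal (a * f (a * t - b)) =
      volume.withDensity (fun s => ENNReal.ofReal (f s)) ((fun s => (b + s) / a) ⁻¹' S) := by
  let e : ℝ ≃ᵐ ℝ :=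
    ((Homeomorph.mulLeft₀ a ha.ne').trans (Homeomorph.subRight b)).toMeasurableEquiv
  have he : ∀ t, e t = a * t - b := fun _ => rfl
  have hmap : volume.map e = ENNReal.ofReal a⁻¹ • volume := by
    have : (e : ℝ → ℝ) = (fun s => s - b) ∘ fun t => a * t := rfl
    rw [this, ← Measure.map_map (by fun_prop) (by fun_prop), Real.map_volume_mul_left ha.ne',
      abs_of_pos (inv_pos.2 ha), Measure.map_smul, (measurePreserving_sub_right volume b).map_eq]
  have hg : Measurable fun s : ℝ => (b + s) / a := by fun_prop
  have hpre : e ⁻¹' ((fun s => (b + s) / a) ⁻¹' S) = S := by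
    ext t
    simp [he, ha.ne']
  have hvol : volume = ENNReal.ofReal a • volume.map e := by
    rw [hmap, smul_smul, ← ENNReal.ofReal_mul ha.le, mul_inv_cancel₀ ha.ne', ENNReal.ofReal_one,
      one_smul]
  rw [withDensity_apply _ (hg hS)]
  conv_rhs => rw [hvol]
  rw [Measure.restrict_smul, lintegral_smul_measure, e.restrict_map, lintegral_map_equiv, hpre,
    smul_eq_mul, ← lintegral_const_mul' _ _ ENNReal.ofReal_ne_top]
  simp only [he, ENNReal.ofReal_mul ha.le]

/-- Under an i.i.d. `Uniform[0,θ]` sample, `τ_n` has density `t ↦ n · I_{n-1}(n·t − 1)`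
on `[1/n, 1]`, where `I_{n-1}` is the Irwin–Hall density with parameter `n − 1`. -/
theorem tau_density_uniform
    (n : ℕ) (hn : 2 ≤ n) (θ : ℝ) (hθ : 0 < θ)
    (I : ℝ → ℝ)
    (hI : irwinHall (n - 1) = volume.withDensity fun s => ENNReal.ofReal (I s)) :
    (iidUniform n θ).map tau =
      volume.withDensity fun t =>
        ENNReal.ofReal
          (if t ∈ Set.Icc ((n : ℝ)⁻¹) 1 then (n : ℝ) * I ((n : ℝ) * t - 1) else 0) := by
  obtain ⟨m, rfl⟩ : ∃ m, n = m + 1 := ⟨n - 1, by lia⟩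
  rw [Nat.add_sub_cancel] at hI
  have hpos : (0 : ℝ) < (m + 1 : ℕ) := by positivity
  have hg : Measurable fun s : ℝ => (1 + s) / (m + 1 : ℕ) := by fun_prop
  rw [iidUniform_map_tau hθ]
  ext A hA
  have hind : (fun t => ENNReal.ofReal (if t ∈ Set.Icc (((m + 1 : ℕ) : ℝ)⁻¹) 1 then
      ((m + 1 : ℕ) : ℝ) * I (((m + 1 : ℕ) : ℝ) * t - 1) else 0)) =
      (Set.Icc (((m + 1 : ℕ) : ℝ)⁻¹) 1).indicator fun t =>
        ENNReal.ofReal (((m + 1 : ℕ) : ℝ) * I (((m + 1 : ℕ) : ℝ) * t - 1)) := by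
    ext t
    by_cases ht : t ∈ Set.Icc (((m + 1 : ℕ) : ℝ)⁻¹) 1
    · rw [Set.indicator_of_mem ht, if_pos ht]
    · rw [Set.indicator_of_notMem ht, if_neg ht, ENNReal.ofReal_zero]
  rw [withDensity_apply _ hA, hind, lintegral_indicator measurableSet_Icc,
    Measure.restrict_restrict measurableSet_Icc,
    withDensity_affine_apply hpos 1 I (measurableSet_Icc.inter hA), ← hI,
    Measure.map_apply hg hA]
  refine measure_congr ?_
  filter_upwards [ae_irwinHall_mem_Icc m] with s hs
  refine propext ⟨fun h => ⟨⟨?_, ?_⟩, h⟩, fun h => h.2⟩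
  · rw [inv_eq_one_div]
    exact div_le_div_of_nonneg_right (by linarith [hs.1]) hpos.le
  · rw [div_le_one hpos]
    push_cast
    linarith [hs.2]
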